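/- arXiv:1508.06846 — 6 statements merged into one kernel-verified Lean document; each statement's English description precedes it below -/
import Mathlib

section
/- Fix integers m ≥ 2, n ≥ 3, a positive divisor p of m, and k ≥ 1. For an integer a ≥ 0 write [a]_q = 1 + q + ⋯ + q^{a−1} ∈ ℤ[q] for the q-integer. If the polynomial ∏_{i=1}^{n−1} [im]_q · [mn/p]_q divides the polynomial ∏_{i=1}^{n−1} [k+im−1]_q · [k+mn/p−1]_q in ℚ[q] (i.e., the q-Catalan number Cat_k(G(m,p,n), q) = (∏_{i=1}^{n−1} [k+im−1]_q · [k+mn/p−1]_q) / (∏_{i=1}^{n−1} [im]_q · [mn/p]_q) is a polynomial in q), then k ≡ 1 (mod m). -/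
/-!
Since `[a]_q` is the product of the cyclotomic polynomials `Φ_d` over the divisors `d ≠ 1` of `a`,
the multiplicity of `Φ_m` in a product of `q`-integers `[a]_q` is the number of factors with
`m ∣ a`. In the denominator of the `q`-Catalan number at least the `n - 1 ≥ 2` factors `[im]_q`
count, whereas in the numerator `m ∣ k + im - 1` would mean `k ≡ 1 (mod m)`, so otherwise only the
last factor can count.
-/

open Polynomial

/-- The `q`-integer `[a]_q = 1 + q + ⋯ + q^{a-1}`, as a polynomial in `ℚ[q]`. -/
noncomputable def qInt (a : ℕ) : ℚ[X] := ∑ j ∈ Finset.range a, X ^ j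

theorem prod_cyclotomic_eq_qInt {a : ℕ} (ha : 0 < a) :
    ∏ d ∈ a.divisors.erase 1, cyclotomic d ℚ = qInt a :=
  prod_cyclotomic_eq_geom_sum ha ℚ

theorem prime_cyclotomic_rat {m : ℕ} (hm : 0 < m) : Prime (cyclotomic m ℚ) :=
  (cyclotomic.irreducible_rat hm).prime

theorem emultiplicity_cyclotomic_cyclotomic {m : ℕ} (hm : 0 < m) (d : ℕ) :
    emultiplicity (cyclotomic m ℚ) (cyclotomic d ℚ) = if m = d then 1 else 0 := by
  have hprime := prime_cyclotomic_rat hm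
  split_ifs with hmd
  · subst hmd
    exact (FiniteMultiplicity.of_prime_left hprime hprime.ne_zero).emultiplicity_self
  · exact emultiplicity_eq_zero.mpr fun hdvd =>
      hprime.not_isUnit ((cyclotomic.isCoprime_rat hmd).isUnit_of_dvd' dvd_rfl hdvd)

theorem emultiplicity_cyclotomic_qInt {m a : ℕ} (hm : 2 ≤ m) (ha : 0 < a) :
    emultiplicity (cyclotomic m ℚ) (qInt a) = if m ∣ a then 1 else 0 := by
  have hm0 : 0 < m := by lia
  calc emultiplicity (cyclotomic m ℚ) (qInt a)
      = ∑ d ∈ a.divisors.erase 1, if m = d then 1 else 0 := by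
        simp only [← prod_cyclotomic_eq_qInt ha,
          Finset.emultiplicity_prod (prime_cyclotomic_rat hm0),
          emultiplicity_cyclotomic_cyclotomic hm0]
    _ = if m ∣ a then 1 else 0 := by
        simp [Finset.sum_ite_eq, show m ≠ 1 by lia, ha.ne']

theorem emultiplicity_cyclotomic_prod_qInt {ι : Type*} {m : ℕ} (hm : 2 ≤ m) {s : Finset ι}
    {a : ι → ℕ} (ha : ∀ i ∈ s, 0 < a i) :
    emultiplicity (cyclotomic m ℚ) (∏ i ∈ s, qInt (a i)) = (s.filter (m ∣ a ·)).card := by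
  rw [Finset.emultiplicity_prod (prime_cyclotomic_rat (by lia)),
    Finset.sum_congr rfl fun i hi => emultiplicity_cyclotomic_qInt hm (ha i hi),
    Finset.sum_boole]

theorem modEq_one_of_dvd_add_sub_one {m k d : ℕ} (hd : 0 < d) (hmd : m ∣ d)
    (h : m ∣ k + d - 1) : k ≡ 1 [MOD m] :=
  calc k ≡ k + d [MOD m] := ((Nat.modEq_zero_iff_dvd.mpr hmd).add_left k).symm
    _ = (k + d - 1) + 1 := by lia
    _ ≡ 1 [MOD m] := by simpa using (Nat.modEq_zero_iff_dvd.mpr h).add_right 1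

theorem qCatalan_polynomial_imp_k_equiv_one_general {ι κ : Type*} {s : Finset ι} {t : Finset κ}
    {d : ι → ℕ} {b : κ → ℕ} {m k : ℕ} (hm : 2 ≤ m) (hts : t.card < s.card)
    (hd : ∀ i ∈ s, 0 < d i) (hmd : ∀ i ∈ s, m ∣ d i) (hb : ∀ j ∈ t, 0 < b j)
    (hdvd : ∏ i ∈ s, qInt (d i) ∣ (∏ i ∈ s, qInt (k + d i - 1)) * ∏ j ∈ t, qInt (b j)) :
    k ≡ 1 [MOD m] := by
  by_contra hk
  have hndvd : ∀ i ∈ s, ¬ m ∣ k + d i - 1 := fun i hi h =>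
    hk (modEq_one_of_dvd_add_sub_one (hd i hi) (hmd i hi) h)
  have hpos : ∀ i ∈ s, 0 < k + d i - 1 := fun i hi =>
    Nat.pos_of_ne_zero fun h => hndvd i hi (h ▸ dvd_zero m)
  have hcard : (s.card : ℕ∞) ≤ t.card :=
    calc (s.card : ℕ∞)
        = emultiplicity (cyclotomic m ℚ) (∏ i ∈ s, qInt (d i)) := by
          rw [emultiplicity_cyclotomic_prod_qInt hm hd, Finset.filter_true_of_mem hmd]
      _ ≤ emultiplicity (cyclotomic m ℚ)
            ((∏ i ∈ s, qInt (k + d i - 1)) * ∏ j ∈ t, qInt (b j)) :=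
          emultiplicity_le_emultiplicity_of_dvd_right hdvd
      _ = (t.filter (m ∣ b ·)).card := by
          rw [emultiplicity_mul (prime_cyclotomic_rat (by lia)),
            emultiplicity_cyclotomic_prod_qInt hm hpos, emultiplicity_cyclotomic_prod_qInt hm hb,
            Finset.filter_false_of_mem hndvd, Finset.card_empty, Nat.cast_zero, zero_add]
      _ ≤ t.card := by exact_mod_cast t.card_filter_le _
  exact hts.not_ge (by exact_mod_cast hcard)

/-- For `m ≥ 2`, `n ≥ 3`, `p` a positive divisor of `m`, and `k ≥ 1`:
if `∏_{i=1}^{n-1} [im]_q ⬝ [mn/p]_q` divides `∏_{i=1}^{n-1} [k+im-1]_q ⬝ [k+mn/p-1]_q`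
in `ℚ[q]` (i.e. the q-Catalan number `Cat_k(G(m,p,n), q)` is a polynomial), then
`k ≡ 1 (mod m)`. -/
theorem qCatalan_polynomial_imp_k_equiv_one
    (m n p k : ℕ) (hm : 2 ≤ m) (hn : 3 ≤ n) (hp : 0 < p) (hpm : p ∣ m) (hk : 1 ≤ k)
    (hdvd : (∏ i ∈ Finset.Icc 1 (n - 1), qInt (i * m)) * qInt (m * n / p) ∣
            (∏ i ∈ Finset.Icc 1 (n - 1), qInt (k + i * m - 1)) * qInt (k + m * n / p - 1)) :
    k ≡ 1 [MOD m] := by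
  have hlast : 0 < m * n / p := Nat.div_pos (Nat.le_of_dvd (by positivity) (hpm.mul_right n)) hp
  exact qCatalan_polynomial_imp_k_equiv_one_general (s := Finset.Icc 1 (n - 1)) (t := {m * n / p})
    (b := (k + · - 1)) hm (by simp only [Finset.card_singleton, Nat.card_Icc]; lia)
    (fun i hi => Nat.mul_pos (Finset.mem_Icc.mp hi).1 (by lia)) (fun i _ => dvd_mul_left m i)
    (by simp only [Finset.mem_singleton, forall_eq]; lia)
    (by simpa only [Finset.prod_singleton] using dvd_of_mul_right_dvd hdvd)
end

section
/- Fix integers m ≥ 2, a positive divisor p of m, and k ≥ m+1. For an integer a ≥ 0 write [a]_q = 1 + q + ⋯ + q^{a−1} ∈ ℤ[q] for the q-integer. If the polynomial [m]_q · [2m/p]_q divides the polynomial [k−1]_q · [k−m−1]_q in ℚ[q] (i.e., the dual q-Catalan number Cat*_k(G(m,p,2), q) = q^{m+2} [k−1]_q [k−m−1]_q / ([m]_q [2m/p]_q) is a polynomial in q), then k ≡ 1 (mod m). -/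
open Polynomial

/-! The cyclotomic polynomial `Φ_m` is irreducible and divides `[a]_q` exactly when `m ∣ a`. Since
it divides `[m]_q`, it divides one of `[k-1]_q` and `[k-m-1]_q`, whose indices agree modulo `m`. -/

theorem aeval_qInt_eq_zero_iff {R : Type*} [Ring R] [NoZeroDivisors R] [Algebra ℚ R] {x : R}
    (hx : x ≠ 1) (a : ℕ) : aeval x (qInt a) = 0 ↔ x ^ a = 1 := by
  have hgeom : aeval x (qInt a) * (x - 1) = x ^ a - 1 := by
    simpa only [qInt, map_sum, map_pow, aeval_X] using geom_sum_mul x a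
  rw [← sub_eq_zero (a := x ^ a), ← hgeom, mul_eq_zero_iff_right (sub_ne_zero.mpr hx)]

theorem cyclotomic_dvd_qInt_iff {m : ℕ} (hm : 1 < m) (a : ℕ) :
    cyclotomic m ℚ ∣ qInt a ↔ m ∣ a := by
  have hζ := Complex.isPrimitiveRoot_exp m (by lia)
  rw [cyclotomic_eq_minpoly_rat hζ (by lia), minpoly.dvd_iff,
    aeval_qInt_eq_zero_iff (hζ.ne_one hm), hζ.pow_eq_one_iff_dvd]

theorem cyclotomic_dvd_qInt_mul_qInt_iff {m : ℕ} (hm : 1 < m) (a b : ℕ) :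
    cyclotomic m ℚ ∣ qInt a * qInt b ↔ m ∣ a ∨ m ∣ b := by
  have hprime : Prime (cyclotomic m ℚ) := (cyclotomic.irreducible_rat (by lia)).prime
  rw [hprime.dvd_mul, cyclotomic_dvd_qInt_iff hm, cyclotomic_dvd_qInt_iff hm]

theorem dual_qCatalan_polynomial_imp_k_equiv_one_general
    (m k : ℕ) (hm : 2 ≤ m) (hk : m + 1 ≤ k)
    (hdvd : cyclotomic m ℚ ∣ qInt (k - 1) * qInt (k - m - 1)) :
    k ≡ 1 [MOD m] := by
  have hmk : m ∣ k - 1 := by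
    rcases (cyclotomic_dvd_qInt_mul_qInt_iff hm _ _).mp hdvd with h | h
    · exact h
    · rwa [Nat.sub_right_comm, Nat.dvd_sub_iff_left (by lia) dvd_rfl] at h
  exact ((Nat.modEq_iff_dvd' (by lia)).mpr hmk).symm

/-- For `m ≥ 2`, `p` a positive divisor of `m`, and `k ≥ m + 1`:
if `[m]_q ⬝ [2m/p]_q` divides `[k-1]_q ⬝ [k-m-1]_q` in `ℚ[q]` (i.e. the dual q-Catalan number
`Cat*_k(G(m,p,2), q) = q^{m+2} [k-1]_q [k-m-1]_q / ([m]_q [2m/p]_q)` is a polynomial), then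
`k ≡ 1 (mod m)`. -/
theorem dual_qCatalan_polynomial_imp_k_equiv_one
    (m p k : ℕ) (hm : 2 ≤ m) (hp : 0 < p) (hpm : p ∣ m) (hk : m + 1 ≤ k)
    (hdvd : qInt m * qInt (2 * m / p) ∣ qInt (k - 1) * qInt (k - m - 1)) :
    k ≡ 1 [MOD m] :=
  have hcyc : cyclotomic m ℚ ∣ qInt m := (cyclotomic_dvd_qInt_iff hm m).mpr dvd_rfl
  dual_qCatalan_polynomial_imp_k_equiv_one_general m k hm hk
    (hcyc.trans (dvd_of_mul_right_dvd hdvd))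
end

section
/- Let m ≥ 2 and n ≥ 3 be integers and let k be any integer. Suppose that m^{n−1}·n! divides (∏_{i=1}^{n−1} (k + i m − 1)) · (k + n − 1) in ℤ, and that m^{n−1}·n! divides (∏_{i=1}^{n−1} (k − i m + m − 1)) · (k − (n−1)m + n − 1) in ℤ. Then m divides k − 1. -/
/-!
Replace `n!` by its divisor `n * (n - 1)`. Put `g = gcd (k - 1, m)` and write
`k - 1 = g * u`, `m = g * w`. Each of the `n - 1` factors under either product sign is `g` times
some `u + c * w`, which is coprime to `w`. Cancelling `g ^ (n - 1)`, we see that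
`w ^ (n - 1) * n * (n - 1)` divides `A * (k - 1 + n)` and `B * (k - 1 + n - (n - 1) * m)` with `A`
and `B` coprime to `w`. The last factors differ by `(n - 1) * g * w`, so
`w ^ (n - 2) * n ∣ A * B * g`, and `w * n ∣ A * B * g` because `n ≥ 3`. Since `g ∣ k - 1` and
`w * n ∣ A * (k - 1 + n)`, it follows that `w * n ∣ A * B * n`. Thus `w` divides `A * B`, to which
it is coprime, so `w` is a unit and `m ∣ g ∣ k - 1`.
-/

section CommRing

variable {ι R : Type*} [CommRing R] {s : Finset ι}

theorem prod_mul_add_mul_mul (g u w : R) (c : ι → R) :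
    ∏ i ∈ s, (g * u + c i * (g * w)) = g ^ s.card * ∏ i ∈ s, (u + c i * w) := by
  rw [← Finset.prod_const, ← Finset.prod_mul_distrib]
  exact Finset.prod_congr rfl fun i _ => by ring

theorem isRelPrime_prod_add_mul [DecompositionMonoid R] {u w : R} (h : IsRelPrime w u)
    (c : ι → R) : IsRelPrime w (∏ i ∈ s, (u + c i * w)) :=
  IsRelPrime.prod_right fun i _ => h.add_mul_right_right (c i)

variable [IsDomain R]

theorem pow_mul_dvd_prod_add_mul_mul {g u w a b : R} (hg : g ≠ 0) (c : ι → R)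
    (h : (g * w) ^ s.card * a ∣ (∏ i ∈ s, (g * u + c i * (g * w))) * b) :
    w ^ s.card * a ∣ (∏ i ∈ s, (u + c i * w)) * b := by
  rw [prod_mul_add_mul_mul, mul_pow, mul_assoc, mul_assoc] at h
  exact (mul_dvd_mul_iff_left (pow_ne_zero _ hg)).mp h

theorem dvd_mul_of_pow_mul_dvd_mul_add {g u w x y A B : R} {N : ℕ} (hN : 2 ≤ N) (hg : g ≠ 0)
    (hw : w ≠ 0) (hy : y ≠ 0) (hA : w ^ N * (x * y) ∣ A * (g * u + x))
    (hB : w ^ N * (x * y) ∣ B * (g * u + x - y * (g * w))) : w ∣ A * B := by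
  obtain ⟨M, rfl⟩ := Nat.exists_eq_add_of_le' hN
  have hdiff : (w * y) * (w ^ (M + 1) * x) ∣ (w * y) * (A * B * g) := by
    convert dvd_sub (hA.mul_left B) (hB.mul_left A) using 1 <;> ring
  have hABg : w ^ (M + 1) * x ∣ A * B * g :=
    (mul_dvd_mul_iff_left (mul_ne_zero hw hy)).mp hdiff
  obtain rfl | hx := eq_or_ne x 0
  · have hAB : A * B = 0 := by simpa [hg] using hABg
    exact hAB ▸ dvd_zero w
  have hwx : w * x ∣ w ^ (M + 1) * x := mul_dvd_mul_right (dvd_pow_self w M.succ_ne_zero) x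
  have hwx' : w * x ∣ w ^ (M + 2) * (x * y) :=
    mul_dvd_mul (dvd_pow_self w (by lia)) (dvd_mul_right x y)
  have hABx : w * x ∣ A * B * x := by
    convert dvd_sub ((hwx'.trans hA).mul_left B) ((hwx.trans hABg).mul_left u) using 1
    ring
  exact (mul_dvd_mul_iff_right hx).mp hABx

theorem dvd_of_pow_card_mul_dvd_prod_add_mul [IsGCDMonoid R] (hs : 2 ≤ s.card) {m j x y : R}
    (hm : m ≠ 0) (hy : y ≠ 0) (c d : ι → R)
    (hc : m ^ s.card * (x * y) ∣ (∏ i ∈ s, (j + c i * m)) * (j + x))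
    (hd : m ^ s.card * (x * y) ∣ (∏ i ∈ s, (j + d i * m)) * (j + x - y * m)) : m ∣ j := by
  obtain ⟨_⟩ := ‹IsGCDMonoid R›
  obtain ⟨u, w, hj, hmw, hunit⟩ := extract_gcd j m
  generalize gcd j m = g at hj hmw
  subst hj hmw
  have hg : g ≠ 0 := left_ne_zero_of_mul hm
  have hrel : IsRelPrime w u := (gcd_isUnit_iff_isRelPrime.mp hunit).symm
  have hdvd := dvd_mul_of_pow_mul_dvd_mul_add hs hg (right_ne_zero_of_mul hm) hy
    (pow_mul_dvd_prod_add_mul_mul hg c hc) (pow_mul_dvd_prod_add_mul_mul hg d hd)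
  have hw : IsUnit w := ((isRelPrime_prod_add_mul hrel c).mul_right
    (isRelPrime_prod_add_mul hrel d)).isUnit_of_dvd hdvd
  exact mul_dvd_mul_left g hw.dvd

end CommRing

theorem natCast_mul_sub_one_dvd_factorial {R : Type*} [Ring R] {n : ℕ} (hn : 2 ≤ n) :
    (n : R) * (n - 1) ∣ (n.factorial : R) := by
  rw [← Nat.cast_descFactorial_two, ← Nat.factorial_mul_descFactorial hn]
  exact Nat.cast_dvd_cast (dvd_mul_left _ _)

theorem mult_triv_det_integer_imp_k_equiv_one_general {R : Type*} [CommRing R] [IsDomain R]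
    [IsGCDMonoid R] {n : ℕ} (hn : 3 ≤ n) {m k : R} (hm : m ≠ 0) (hn_one : (n : R) ≠ 1)
    (h1 : m ^ (n - 1) * (n * (n - 1)) ∣
      (∏ i ∈ Finset.Icc 1 (n - 1), (k + i * m - 1)) * (k + n - 1))
    (h2 : m ^ (n - 1) * (n * (n - 1)) ∣
      (∏ i ∈ Finset.Icc 1 (n - 1), (k - i * m + m - 1)) * (k - (n - 1) * m + n - 1)) :
    m ∣ k - 1 := by
  have hcard : (Finset.Icc 1 (n - 1)).card = n - 1 := by simp
  refine dvd_of_pow_card_mul_dvd_prod_add_mul (s := Finset.Icc 1 (n - 1)) (x := n) (y := n - 1)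
    (by lia) hm (sub_ne_zero.mpr hn_one) (fun i => i) (fun i => 1 - i) ?_ ?_ <;> rw [hcard]
  · convert h1 using 2
    · exact Finset.prod_congr rfl fun i _ => by ring
    · ring
  · convert h2 using 2
    · exact Finset.prod_congr rfl fun i _ => by ring
    · ring

/-- For `m ≥ 2`, `n ≥ 3` and any integer `k`: if `m^{n-1} n!` divides both
`(∏_{i=1}^{n-1} (k + im - 1)) (k + n - 1)` and
`(∏_{i=1}^{n-1} (k - im + m - 1)) (k - (n-1)m + n - 1)` in `ℤ`, then `m ∣ k - 1`. -/
theorem mult_triv_det_integer_imp_k_equiv_one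
    (m n : ℕ) (hm : 2 ≤ m) (hn : 3 ≤ n) (k : ℤ)
    (h1 : ((m : ℤ) ^ (n - 1) * (n.factorial : ℤ)) ∣
      (∏ i ∈ Finset.Icc 1 (n - 1), (k + (i : ℤ) * m - 1)) * (k + n - 1))
    (h2 : ((m : ℤ) ^ (n - 1) * (n.factorial : ℤ)) ∣
      (∏ i ∈ Finset.Icc 1 (n - 1), (k - (i : ℤ) * m + m - 1)) * (k - ((n : ℤ) - 1) * m + n - 1)) :
    (m : ℤ) ∣ k - 1 :=
  have hdvd := mul_dvd_mul_left ((m : ℤ) ^ (n - 1))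
    (natCast_mul_sub_one_dvd_factorial (R := ℤ) (n := n) (by lia))
  mult_triv_det_integer_imp_k_equiv_one_general hn (by lia) (by lia) (hdvd.trans h1) (hdvd.trans h2)
end

section
/- Let n ≥ 3 and m ≥ 1 be integers. In ℚ[X] define f(X) = (1/n!) · ∏_{i=1}^{n−1}(X+i) · (mX+n), g(X) = (1/n!) · ∏_{i=1}^{n−1}(X−i+1) · (m(X−n+1)+n), and h(X) = (n!/2) · (f(X) + g(X)) − (n−2)! · X · (f(X) − g(X)). Then h is a monic polynomial of degree n−1 and every coefficient of h is an integer. -/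
open Polynomial

/-!
Write `D k = X (X - 1) ⋯ (X - k + 1)`. Up to the factor `1 / n!`, `g` is built from `D (n - 1)` and
`f` from its translate by `n - 1`. Applying `D (k + 1) (X + 1) - D (k + 1) (X) = (k + 1) D k (X)`
twice shows `n! (f - g) = n (n - 1) E` with `E ∈ ℤ[X]` a combination of sums of translates of `D k`.
Substituting gives `h = n! g + (n.choose 2 - X) E`, which is visibly integral.

The polynomial `h` is affine in `m`. In the part proportional to `m` the coefficients of `X ^ n` and
`X ^ (n - 1)` cancel, the latter because `0 + 1 + ⋯ + (n - 2) = (n - 1).choose 2`; in the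
part independent of `m` the leading coefficient is `n - (n - 1) = 1`.
-/

theorem natDegree_C_sub_X_mul_le {R : Type*} [Ring R] {k : ℕ} {p : R[X]} (hp : p.natDegree ≤ k)
    (c : R) :
    ((C c - X) * p).natDegree ≤ k + 1 := by
  have linear : (C c - X).natDegree ≤ 1 := by compute_degree
  simpa [add_comm] using natDegree_mul_le_of_le linear hp

theorem coeff_succ_C_sub_X_mul {R : Type*} [Ring R] {k : ℕ} {p : R[X]} (hp : p.natDegree ≤ k)
    (c : R) :
    ((C c - X) * p).coeff (k + 1) = -p.coeff k := by
  rw [sub_mul, coeff_sub, coeff_C_mul, coeff_X_mul,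
    coeff_eq_zero_of_natDegree_lt (Nat.lt_succ_of_le hp), mul_zero, zero_sub]

theorem isMonicOfDegree_descPochhammer (R : Type*) [Ring R] [Nontrivial R] (k : ℕ) :
    IsMonicOfDegree (descPochhammer R k) k := by
  induction k with
  | zero => simp
  | succ k ih =>
    rw [descPochhammer_succ_right, ← C_eq_natCast]
    exact ih.mul (isMonicOfDegree_X_sub_one _)

section FallingFactorial

variable (R : Type*) [CommRing R]

theorem prod_Icc_X_sub_C_add_one_eq_descPochhammer (k : ℕ) :
    ∏ i ∈ Finset.Icc 1 k, (X - C (i : R) + 1) = descPochhammer R k := by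
  induction k with
  | zero => simp
  | succ k ih =>
    rw [Finset.prod_Icc_succ_top (by lia), ih, descPochhammer_succ_right, map_natCast]
    push_cast
    ring

theorem prod_Icc_X_add_C_eq_descPochhammer_comp (k : ℕ) :
    ∏ i ∈ Finset.Icc 1 k, (X + C (i : R)) = (descPochhammer R k).comp (X + (k : R[X])) := by
  induction k with
  | zero => simp
  | succ k ih =>
    have shift : (X - 1 : R[X]).comp (X + ((k + 1 : ℕ) : R[X])) = X + (k : R[X]) := by
      simp only [sub_comp, X_comp, one_comp, Nat.cast_succ]
      ring
    rw [Finset.prod_Icc_succ_top (by lia), ih, descPochhammer_succ_left, mul_comp, X_comp,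
      comp_assoc, shift, map_natCast, mul_comm]

theorem descPochhammer_succ_comp_X_add_one (k : ℕ) :
    (descPochhammer R (k + 1)).comp (X + 1) =
      descPochhammer R (k + 1) + ((k + 1 : ℕ) : R[X]) * descPochhammer R k := by
  calc (descPochhammer R (k + 1)).comp (X + 1)
      = (X + 1) * descPochhammer R k := by simp [descPochhammer_succ_left, comp_assoc]
    _ = descPochhammer R k * (X - (k : R[X])) + ((k + 1 : ℕ) : R[X]) * descPochhammer R k := by
      push_cast
      ring
    _ = _ := by rw [descPochhammer_succ_right]

end FallingFactorial

section ShiftedSums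

variable (R : Type*) [CommRing R]

/-- The sum `D k (X) + D k (X + 1) + ⋯ + D k (X + l - 1)` of translates of the falling factorial
`D k`; multiplied by `k + 1` it is the increment of `D (k + 1)` over a shift by `l`. -/
noncomputable def shiftedFallingSum (k l : ℕ) : R[X] :=
  ∑ j ∈ Finset.range l, (descPochhammer R k).comp (X + (j : R[X]))

/-- The iterated sum `∑_{i < j < l} D k (X + i)` of translates of the falling factorial `D k`. -/
noncomputable def shiftedFallingDoubleSum (k l : ℕ) : R[X] :=
  ∑ j ∈ Finset.range l, shiftedFallingSum R k j

theorem descPochhammer_succ_comp_X_add_natCast (k l : ℕ) :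
    (descPochhammer R (k + 1)).comp (X + (l : R[X])) =
      descPochhammer R (k + 1) + ((k + 1 : ℕ) : R[X]) * shiftedFallingSum R k l := by
  induction l with
  | zero => simp [shiftedFallingSum]
  | succ l ih =>
    have shift : (X + ((l + 1 : ℕ) : R[X])) = (X + 1 : R[X]).comp (X + (l : R[X])) := by
      simp only [add_comp, X_comp, one_comp, Nat.cast_succ]
      ring
    rw [shift, ← comp_assoc, descPochhammer_succ_comp_X_add_one, add_comp, mul_comp, natCast_comp,
      ih, shiftedFallingSum, shiftedFallingSum, Finset.sum_range_succ]
    ring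

theorem shiftedFallingSum_succ (k l : ℕ) :
    shiftedFallingSum R (k + 1) l = (l : R[X]) * descPochhammer R (k + 1) +
      ((k + 1 : ℕ) : R[X]) * shiftedFallingDoubleSum R k l := by
  rw [shiftedFallingSum, shiftedFallingDoubleSum,
    Finset.sum_congr rfl fun j _ => descPochhammer_succ_comp_X_add_natCast R k j,
    Finset.sum_add_distrib, ← Finset.mul_sum]
  simp

variable [Nontrivial R]

theorem isMonicOfDegree_descPochhammer_comp_X_add_natCast (k j : ℕ) :
    IsMonicOfDegree ((descPochhammer R k).comp (X + (j : R[X]))) k := by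
  simpa using (isMonicOfDegree_descPochhammer R k).comp one_ne_zero
    (isMonicOfDegree_X_add_one (j : R))

theorem natDegree_shiftedFallingSum_le (k l : ℕ) : (shiftedFallingSum R k l).natDegree ≤ k :=
  natDegree_sum_le_of_forall_le _ _ fun j _ =>
    (isMonicOfDegree_descPochhammer_comp_X_add_natCast R k j).natDegree_eq.le

theorem coeff_shiftedFallingSum (k l : ℕ) : (shiftedFallingSum R k l).coeff k = l := by
  have coeff_translate (j : ℕ) : ((descPochhammer R k).comp (X + (j : R[X]))).coeff k = 1 :=
    ((isMonicOfDegree_iff _ _).mp (isMonicOfDegree_descPochhammer_comp_X_add_natCast R k j)).2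
  simp [shiftedFallingSum, coeff_translate]

theorem natDegree_shiftedFallingDoubleSum_le (k l : ℕ) :
    (shiftedFallingDoubleSum R k l).natDegree ≤ k :=
  natDegree_sum_le_of_forall_le _ _ fun j _ => natDegree_shiftedFallingSum_le R k j

theorem coeff_shiftedFallingDoubleSum (k l : ℕ) :
    (shiftedFallingDoubleSum R k l).coeff k = (l.choose 2 : R) := by
  simp only [shiftedFallingDoubleSum, finsetSum_coeff, coeff_shiftedFallingSum]
  rw [← Nat.cast_sum, Finset.sum_range_id, Nat.choose_two_right]

end ShiftedSums

section IntegralForm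

variable {R : Type*} [CommRing R]

/-- The polynomial `n! f` for `n = k + 2`. -/
noncomputable def risingNumerator (k : ℕ) (m : R) : R[X] :=
  (descPochhammer R (k + 1)).comp (X + ((k + 1 : ℕ) : R[X])) * (C m * X + ((k + 2 : ℕ) : R[X]))

/-- The polynomial `n! g` for `n = k + 2`. -/
noncomputable def fallingNumerator (k : ℕ) (m : R) : R[X] :=
  descPochhammer R (k + 1) * (C m * (X - ((k + 1 : ℕ) : R[X])) + ((k + 2 : ℕ) : R[X]))

/-- The quotient `E = n! (f - g) / (n (n - 1))` for `n = k + 2`, in a form free of division. -/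
noncomputable def numeratorQuotient (k : ℕ) (m : R) : R[X] :=
  C m * (descPochhammer R (k + 1) + shiftedFallingDoubleSum R k (k + 1)) +
    shiftedFallingSum R k (k + 1)

/-- The polynomial `h` for `n = k + 2`, in the form `n! g + (n.choose 2 - X) E`, which makes sense
over every commutative ring. -/
noncomputable def integralForm (k : ℕ) (m : R) : R[X] :=
  fallingNumerator k m + (((k + 2).choose 2 : R[X]) - X) * numeratorQuotient k m

theorem risingNumerator_sub_fallingNumerator (k : ℕ) (m : R) :
    risingNumerator k m - fallingNumerator k m =
      (((k + 2) * (k + 1) : ℕ) : R[X]) * numeratorQuotient k m := by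
  have shift_long := descPochhammer_succ_comp_X_add_natCast R (k + 1) (k + 1)
  rw [shiftedFallingSum_succ, descPochhammer_succ_right, mul_comp, sub_comp, X_comp, natCast_comp,
    add_sub_cancel_right] at shift_long
  have shift_short := descPochhammer_succ_comp_X_add_natCast R k (k + 1)
  simp only [risingNumerator, fallingNumerator, numeratorQuotient]
  push_cast at *
  linear_combination C m * shift_long + (k + 2 : R[X]) * shift_short

theorem map_integralForm {S : Type*} [CommRing S] (φ : R →+* S) (k : ℕ) (m : R) :
    (integralForm k m).map φ = integralForm k (φ m) := by
  simp [integralForm, fallingNumerator, numeratorQuotient, shiftedFallingDoubleSum,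
    shiftedFallingSum, Polynomial.map_sum, Polynomial.map_comp]

theorem integralForm_eq_C_mul_add (k : ℕ) (m : R) :
    integralForm k m =
      C m * (((k + 1).choose 2 : R[X]) * descPochhammer R (k + 1) +
        (((k + 2).choose 2 : R[X]) - X) * shiftedFallingDoubleSum R k (k + 1)) +
      (((k + 2 : ℕ) : R[X]) * descPochhammer R (k + 1) +
        (((k + 2).choose 2 : R[X]) - X) * shiftedFallingSum R k (k + 1)) := by
  have pascal : ((k + 2).choose 2 : R[X]) = ((k + 1 : ℕ) : R[X]) + ((k + 1).choose 2 : R[X]) := by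
    rw [Nat.choose_succ_succ' (k + 1) 1, Nat.choose_one_right, Nat.cast_add]
  simp only [integralForm, fallingNumerator, numeratorQuotient]
  linear_combination C m * descPochhammer R (k + 1) * pascal

theorem isMonicOfDegree_integralForm [Nontrivial R] (k : ℕ) (m : R) :
    IsMonicOfDegree (integralForm k m) (k + 1) := by
  obtain ⟨hD, hD'⟩ := (isMonicOfDegree_iff _ _).mp (isMonicOfDegree_descPochhammer R (k + 1))
  have hS := natDegree_shiftedFallingSum_le R k (k + 1)
  have hT := natDegree_shiftedFallingDoubleSum_le R k (k + 1)
  have leading_one : ((k + 2 : ℕ) : R) + -((k + 1 : ℕ) : R) = 1 := by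
    push_cast
    ring
  rw [isMonicOfDegree_iff, integralForm_eq_C_mul_add]
  simp only [← C_eq_natCast]
  constructor
  · refine natDegree_add_le_of_degree_le ((natDegree_C_mul_le _ _).trans ?_) ?_
    · exact natDegree_add_le_of_degree_le ((natDegree_C_mul_le _ _).trans hD)
        (natDegree_C_sub_X_mul_le hT _)
    · exact natDegree_add_le_of_degree_le ((natDegree_C_mul_le _ _).trans hD)
        (natDegree_C_sub_X_mul_le hS _)
  · simp only [coeff_add, coeff_C_mul, coeff_succ_C_sub_X_mul hT, coeff_succ_C_sub_X_mul hS,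
      coeff_shiftedFallingDoubleSum, coeff_shiftedFallingSum, hD', mul_one]
    rw [add_neg_cancel, leading_one, mul_zero, zero_add]

end IntegralForm

theorem factorial_combination_eq_add_choose_two_sub_X_mul {K : Type*} [Field K]
    [CharZero K] (k : ℕ) {F G E : K[X]}
    (hFG : F - G = (((k + 2) * (k + 1) : ℕ) : K[X]) * E) :
    C (((k + 2).factorial : K) / 2) *
          (C (1 / ((k + 2).factorial : K)) * F + C (1 / ((k + 2).factorial : K)) * G) -
        C (k.factorial : K) * X *
          (C (1 / ((k + 2).factorial : K)) * F - C (1 / ((k + 2).factorial : K)) * G) =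
      G + (((k + 2).choose 2 : K[X]) - X) * E := by
  have hfac : ((k + 2).factorial : K) ≠ 0 := mod_cast (k + 2).factorial_ne_zero
  have half : ((k + 2).factorial : K) / 2 * (1 / ((k + 2).factorial : K)) * 2 = 1 := by
    field_simp
  have binomial : ((k + 2).factorial : K) / 2 * (1 / ((k + 2).factorial : K)) *
      ((k + 2) * (k + 1) : ℕ) = ((k + 2).choose 2 : ℕ) := by
    rw [Nat.cast_choose_two]
    push_cast
    field_simp
    ring
  have inverse : (k.factorial : K) * (1 / ((k + 2).factorial : K)) *
      ((k + 2) * (k + 1) : ℕ) = 1 := by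
    rw [mul_one_div, div_mul_eq_mul_div, div_eq_one_iff_eq hfac]
    push_cast [Nat.factorial_succ]
    ring
  replace half := congrArg C half
  replace binomial := congrArg C binomial
  replace inverse := congrArg C inverse
  simp only [C_mul, map_natCast, map_ofNat, map_one] at half binomial inverse
  rw [sub_eq_iff_eq_add.mp hFG, map_natCast C k.factorial]
  linear_combination G * half + E * binomial - X * E * inverse

theorem h_monic_int_coeffs_general
    (n : ℕ) (m : ℤ) (hn : 2 ≤ n) (f g h : ℚ[X])
    (hf : f = C (1 / (n.factorial : ℚ)) *
      ((∏ i ∈ Finset.Icc 1 (n - 1), (X + C (i : ℚ))) * (C (m : ℚ) * X + C (n : ℚ))))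
    (hg : g = C (1 / (n.factorial : ℚ)) *
      ((∏ i ∈ Finset.Icc 1 (n - 1), (X - C (i : ℚ) + 1)) *
        (C (m : ℚ) * (X - C (n : ℚ) + 1) + C (n : ℚ))))
    (hh : h = C ((n.factorial : ℚ) / 2) * (f + g) - C (((n - 2).factorial : ℚ)) * X * (f - g)) :
    h.Monic ∧ h.natDegree = n - 1 ∧ ∀ j : ℕ, ∃ z : ℤ, h.coeff j = (z : ℚ) := by
  obtain ⟨k, rfl⟩ := Nat.exists_eq_add_of_le' hn
  have hf' : f = C (1 / ((k + 2).factorial : ℚ)) * risingNumerator k (m : ℚ) := by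
    rw [hf, Nat.add_sub_assoc one_le_two, prod_Icc_X_add_C_eq_descPochhammer_comp, map_natCast]
    rfl
  have hg' : g = C (1 / ((k + 2).factorial : ℚ)) * fallingNumerator k (m : ℚ) := by
    rw [hg, Nat.add_sub_assoc one_le_two, prod_Icc_X_sub_C_add_one_eq_descPochhammer,
      map_natCast, fallingNumerator]
    push_cast
    ring
  have hh' : h = integralForm k (m : ℚ) := by
    rw [hh, hf', hg', Nat.add_sub_cancel]
    exact factorial_combination_eq_add_choose_two_sub_X_mul k
      (risingNumerator_sub_fallingNumerator k _)
  obtain ⟨hdeg, hmonic⟩ := isMonicOfDegree_integralForm k (m : ℚ)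
  refine ⟨hh' ▸ hmonic, hh' ▸ hdeg, fun j => ⟨(integralForm k m).coeff j, ?_⟩⟩
  rw [hh', ← eq_intCast (Int.castRingHom ℚ) m, ← map_integralForm, coeff_map, eq_intCast]

/-- For `n ≥ 3`, `m ≥ 1`, with
`f(X) = (1/n!) ∏_{i=1}^{n-1}(X+i) ⬝ (mX + n)`,
`g(X) = (1/n!) ∏_{i=1}^{n-1}(X-i+1) ⬝ (m(X-n+1) + n)`, and
`h(X) = (n!/2)(f(X)+g(X)) - (n-2)! X (f(X)-g(X))` in `ℚ[X]`,
the polynomial `h` is monic of degree `n - 1` and has integer coefficients. -/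
theorem h_monic_int_coeffs
    (n m : ℕ) (hn : 3 ≤ n) (hm : 1 ≤ m) (f g h : ℚ[X])
    (hf : f = C (1 / (n.factorial : ℚ)) *
      ((∏ i ∈ Finset.Icc 1 (n - 1), (X + C (i : ℚ))) * (C (m : ℚ) * X + C (n : ℚ))))
    (hg : g = C (1 / (n.factorial : ℚ)) *
      ((∏ i ∈ Finset.Icc 1 (n - 1), (X - C (i : ℚ) + 1)) *
        (C (m : ℚ) * (X - C (n : ℚ) + 1) + C (n : ℚ))))
    (hh : h = C ((n.factorial : ℚ) / 2) * (f + g) - C (((n - 2).factorial : ℚ)) * X * (f - g)) :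
    h.Monic ∧ h.natDegree = n - 1 ∧ ∀ j : ℕ, ∃ z : ℤ, h.coeff j = (z : ℚ) :=
  h_monic_int_coeffs_general n m (by lia) f g h (mod_cast hf) (mod_cast hg) hh
end

section
/- Let n ≥ 1 and j ≥ 0 be integers with j ≤ n and with n − j odd. Let c(n,j) denote the signless Stirling number of the first kind, i.e., the coefficient of X^j in the polynomial X(X+1)(X+2)⋯(X+n−1) ∈ ℤ[X]. Then the binomial coefficient C(n,2) = n(n−1)/2 divides c(n,j). -/
open Polynomial

/-!
Reversing the order of the factors of `P = X(X + 1)⋯(X + n - 1)` gives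
`P(-X) = (-1)^n P(X + 1 - n)`. Modulo `n - 1` the right-hand side is `(-1)^n P(X)`. Modulo `n` it
is `(-1)^n P(X + 1)`, which is again `(-1)^n P(X)`, since shifting `X` by one only replaces the
factor `X` by `X + n`. As `n` and `n - 1` are coprime, `P(-X) ≡ (-1)^n P(X)` modulo `n(n - 1)`, and
comparing coefficients of `X^j` for `n - j` odd shows that `n(n - 1)` divides `2 c(n,j)`.
-/

section CommRing

variable {R : Type*} [CommRing R]

theorem sub_dvd_comp_sub_comp (p q r : R[X]) : q - r ∣ p.comp q - p.comp r := by
  simpa only [eval_map, comp] using sub_dvd_eval_sub q r (p.map C)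

theorem dvd_two_mul_coeff_of_C_dvd_comp_neg_X_sub {r : R} {p : R[X]} {n k : ℕ}
    (h : C r ∣ p.comp (-X) - (-1) ^ n * p) (hnk : Odd (n + k)) : r ∣ 2 * p.coeff k := by
  have hcoeff : (p.comp (-X) - (-1) ^ n * p).coeff k = (-1) ^ k * (2 * p.coeff k) := by
    have hsign : (-1 : R) ^ n = (-1) ^ (k + 1) := neg_one_pow_congr (by grind)
    have hneg : (-X : R[X]) = C (-1) * X := by simp
    have hpow : ((-1) ^ n : R[X]) = C ((-1) ^ n) := by simp
    rw [hneg, hpow, coeff_sub, comp_C_mul_X_coeff, coeff_C_mul, hsign]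
    ring
  have hdvd := (C_dvd_iff_dvd_coeff r _).mp h k
  rwa [hcoeff, (isUnit_one.neg.pow k).dvd_mul_left] at hdvd

variable (R)

theorem ascPochhammer_comp_neg_X (n : ℕ) :
    (ascPochhammer R n).comp (-X) =
      (-1) ^ n * (ascPochhammer R n).comp (X + 1 - (n : R[X])) := by
  induction n with
  | zero => simp
  | succ n ih =>
    have hshift : (ascPochhammer R (n + 1)).comp (X - (n : R[X])) =
        (X - (n : R[X])) * (ascPochhammer R n).comp (X + 1 - (n : R[X])) := by
      rw [ascPochhammer_succ_left, mul_comp, X_comp, comp_assoc, add_comp, X_comp, one_comp,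
        sub_add_eq_add_sub]
    calc (ascPochhammer R (n + 1)).comp (-X)
        = (-1) ^ n * (ascPochhammer R n).comp (X + 1 - (n : R[X])) * (-X + (n : R[X])) := by
          rw [ascPochhammer_succ_right, mul_comp, ih, add_comp, X_comp, natCast_comp]
      _ = (-1) ^ (n + 1) * (ascPochhammer R (n + 1)).comp (X - (n : R[X])) := by
          rw [hshift]
          ring
      _ = (-1) ^ (n + 1) *
            (ascPochhammer R (n + 1)).comp (X + 1 - ((n + 1 : ℕ) : R[X])) := by
          rw [Nat.cast_succ, add_sub_add_right_eq_sub]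

theorem natCast_dvd_ascPochhammer_comp_X_add_one_sub (n : ℕ) :
    (n : R[X]) ∣ (ascPochhammer R n).comp (X + 1) - ascPochhammer R n := by
  cases n with
  | zero => simp
  | succ n =>
    rw [ascPochhammer_succ_comp_X_add_one, add_sub_cancel_left, nsmul_eq_mul]
    exact dvd_mul_right _ _

theorem natCast_mul_sub_one_dvd_ascPochhammer_comp_sub (n : ℕ) :
    (n * (n - 1) : R[X]) ∣
      (ascPochhammer R n).comp (X + 1 - (n : R[X])) - ascPochhammer R n := by
  have hcoprime : IsCoprime (n : R[X]) (n - 1) := ⟨1, -1, by ring⟩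
  have hn : (n : R[X]) ∣
      (ascPochhammer R n).comp (X + 1) - (ascPochhammer R n).comp (X + 1 - (n : R[X])) := by
    have hdiff : (X : R[X]) + 1 - (X + 1 - (n : R[X])) = (n : R[X]) := by ring
    have hcomp := sub_dvd_comp_sub_comp (ascPochhammer R n) (X + 1) (X + 1 - (n : R[X]))
    rwa [hdiff] at hcomp
  have hpred : (n - 1 : R[X]) ∣
      ascPochhammer R n - (ascPochhammer R n).comp (X + 1 - (n : R[X])) := by
    have hdiff : (X : R[X]) - (X + 1 - (n : R[X])) = (n : R[X]) - 1 := by ring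
    have hcomp := sub_dvd_comp_sub_comp (ascPochhammer R n) X (X + 1 - (n : R[X]))
    rwa [hdiff, comp_X] at hcomp
  refine hcoprime.mul_dvd ?_ (dvd_sub_comm.mp hpred)
  simpa only [sub_sub_sub_cancel_left] using
    (natCast_dvd_ascPochhammer_comp_X_add_one_sub R n).sub hn

theorem natCast_mul_sub_one_dvd_two_mul_coeff_ascPochhammer {n k : ℕ} (hnk : Odd (n + k)) :
    (n * (n - 1) : R) ∣ 2 * (ascPochhammer R n).coeff k := by
  refine dvd_two_mul_coeff_of_C_dvd_comp_neg_X_sub ?_ hnk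
  rw [ascPochhammer_comp_neg_X, ← mul_sub]
  simpa only [C_mul, C_sub, C_1, map_natCast] using
    (natCast_mul_sub_one_dvd_ascPochhammer_comp_sub R n).mul_left ((-1) ^ n)

theorem prod_Icc_X_add_C_sub_one (n : ℕ) :
    ∏ i ∈ Finset.Icc 1 n, ((X : R[X]) + C (i : R) - 1) = ascPochhammer R n := by
  induction n with
  | zero => simp
  | succ n ih =>
    rw [Finset.prod_Icc_succ_top (Nat.le_add_left 1 n), ih, ascPochhammer_succ_right]
    simp [add_sub_assoc]

end CommRing

theorem choose_two_dvd_coeff_ascPochhammer {n k : ℕ} (hnk : Odd (n + k)) :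
    (n.choose 2 : ℤ) ∣ (ascPochhammer ℤ n).coeff k := by
  have hchoose : 2 * (n.choose 2 : ℤ) = n * (n - 1) := by
    qify
    rw [Nat.cast_choose_two]
    ring
  rw [← mul_dvd_mul_iff_left (two_ne_zero (α := ℤ)), hchoose]
  exact natCast_mul_sub_one_dvd_two_mul_coeff_ascPochhammer ℤ hnk

/-- If `1 ≤ n`, `j ≤ n` and `n - j` is odd, then the binomial coefficient
`C(n,2) = n(n-1)/2` divides the signless Stirling number of the first kind `c(n,j)`,
i.e. the coefficient of `X^j` in `∏_{i=1}^{n} (X + i - 1) = X(X+1)⋯(X+n-1)`. -/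
theorem choose_two_dvd_stirling_first
    (n j : ℕ) (hn : 1 ≤ n) (hj : j ≤ n) (hodd : Odd (n - j)) :
    ((n.choose 2 : ℤ)) ∣ (∏ i ∈ Finset.Icc 1 n, ((X : ℤ[X]) + C (i : ℤ) - 1)).coeff j := by
  have hparity : Odd (n + j) := Nat.odd_add.mpr ((Nat.odd_sub hj).mp hodd)
  rw [prod_Icc_X_add_C_sub_one]
  exact choose_two_dvd_coeff_ascPochhammer hparity
end

section
/- Let m ≥ 2 be an integer, let p be a positive divisor of m with p < m, and let k be any integer. Suppose that 2m² divides p·(k+m−1)·(k + 2m/p − 1) in ℤ and that 2m² divides p·(k−1)·(k+m−1) in ℤ. Then m divides k − 1. -/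
theorem mult_chi_eta_integer_imp_k_equiv_one_general {R : Type*} [CommRing R] {m p q k : R}
    (hm : IsLeftRegular (2 * m)) (hpq : p * q = 2 * m)
    (h1 : 2 * m ^ 2 ∣ p * (k + m - 1) * (k + q - 1))
    (h2 : 2 * m ^ 2 ∣ p * (k - 1) * (k + m - 1)) :
    m ∣ k - 1 := by
  have sub_eq_two_mul : p * (k + m - 1) * (k + q - 1) - p * (k - 1) * (k + m - 1) =
      2 * m * (k - 1 + m) := by
    linear_combination (k - 1 + m) * hpq
  have mul_dvd : 2 * m * m ∣ 2 * m * (k - 1 + m) := by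
    rw [← sub_eq_two_mul, mul_assoc, ← sq]
    exact dvd_sub h1 h2
  exact dvd_add_self_right.mp (hm.dvd_cancel_left.mp mul_dvd)

/-- For `m ≥ 2`, `p` a positive divisor of `m` with `p < m`, and any integer `k`:
if `2m²` divides both `p (k + m - 1)(k + 2m/p - 1)` and `p (k - 1)(k + m - 1)` in `ℤ`,
then `m ∣ k - 1`. -/
theorem mult_chi_eta_integer_imp_k_equiv_one
    (m p : ℕ) (hm : 2 ≤ m) (hp : 0 < p) (hpm : p ∣ m) (hplt : p < m) (k : ℤ)
    (h1 : (2 * (m : ℤ) ^ 2) ∣ (p : ℤ) * (k + m - 1) * (k + ((2 * m / p : ℕ) : ℤ) - 1))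
    (h2 : (2 * (m : ℤ) ^ 2) ∣ (p : ℤ) * (k - 1) * (k + m - 1)) :
    (m : ℤ) ∣ k - 1 :=
  mult_chi_eta_integer_imp_k_equiv_one_general (IsRegular.of_ne_zero (by positivity)).left
    (mod_cast Nat.mul_div_cancel' (hpm.mul_left 2)) h1 h2
end
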